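/- The Star STS instance is a YES instance if and only if the constructed weighted token swapping instance admits a swap sequence of total cost at most K that transforms the initial token placement into the target token placement. -/

import Mathlib

/-!
STATEMENT 2: The Star STS instance is a YES instance iff the constructed *weighted*
token swapping instance admits a swap sequence of total cost at most `K`.

Star STS data: `m` slots (`Fin m`), items `0,…,m` encoded as `Option (Fin m)` with
`none` = item 0 (initially at the center), target permutation `π` on items, swap
sequence `s : Fin n → Fin m` in which every slot occurs and no slot occurs twice
consecutively.

Constructed tree: a root; an ordering gadget (path of `n` vertices); `m` slot gadgets,
slot gadget `i` being a path of `nᵢ` vertices (`nᵢ` = number of occurrences of slot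
`i`) together with a nook leaf attached to the path vertex adjacent to the root.
Weight-0 item tokens sit at the root/nooks exactly as the items of the Star STS
instance; weight-1 tokens `x₁,…,xₙ` start on the ordering path (`x₁` nearest the
root), the targets of `y₁,…,yₙ` fill the ordering path (`yₙ` nearest the root); if
slot `i` occurs at positions `j₁<…<j_{nᵢ}` then `y_{j₁},…` start on the path of slot
gadget `i` (`y_{j₁}` nearest the root) and the targets of `x_{j₁},…` fill that path in
reverse order (`x_{j_{nᵢ}}` nearest the root).  `K` is the sum over all `xⱼ`, `yⱼ` of
the tree distance between the token's initial and target vertices.  The cost of a swap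
is the sum of the weights of the two swapped tokens.
-/

namespace Stmt2

/-- Vertices of the constructed tree: the root, ordering-gadget vertices `ord d`
(distance `d+1` from the root), slot-gadget path vertices `slot i d` (distance `d+1`
from the root in slot gadget `i`), and nooks.  (Coordinates range over all of `ℕ`;
the graph below only puts edges between the vertices of the construction, so the
remaining vertices are isolated and carry no tokens.) -/
inductive Vtx (m : ℕ) where
  | root : Vtx m
  | ord : ℕ → Vtx m
  | slot : Fin m → ℕ → Vtx m
  | nook : Fin m → Vtx m
deriving DecidableEq

/-- Adjacency generator for the tree: `len i` = length of the path of slot gadget `i`,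
`lenOrd` = length of the ordering path, `nd` = distance from the root of the path
vertex to which the nook of each slot gadget is attached. -/
def rel {m : ℕ} (len : Fin m → ℕ) (lenOrd nd : ℕ) : Vtx m → Vtx m → Prop
  | .root, .ord d => d = 0 ∧ 0 < lenOrd
  | .ord d, .ord d' => d' = d + 1 ∧ d' < lenOrd
  | .root, .slot i d => d = 0 ∧ 0 < len i
  | .slot i d, .slot i' d' => i = i' ∧ d' = d + 1 ∧ d' < len i
  | .slot i d, .nook i' => i = i' ∧ d + 1 = nd ∧ d < len i
  | _, _ => False

/-- The constructed tree, as a simple graph. -/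
def Tree {m : ℕ} (len : Fin m → ℕ) (lenOrd nd : ℕ) : SimpleGraph (Vtx m) :=
  SimpleGraph.fromRel (rel len lenOrd nd)

/-- Swap the two values `e.1`, `e.2`. -/
def swapV {V : Type*} [DecidableEq V] (e : V × V) (v : V) : V :=
  if v = e.1 then e.2 else if v = e.2 then e.1 else v

/-- Apply a sequence of swaps to a token placement (token ↦ vertex). -/
def applySwaps {T V : Type*} [DecidableEq V] (σ : List (V × V)) (f : T → V) : T → V :=
  σ.foldl (fun g e => fun t => swapV e (g t)) f

/-- Apply a sequence of star swaps (each given by a leaf) to a placement on the star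
with center `none` and leaves `some l`. -/
def starApply {L : Type*} [DecidableEq L] (σ : List L) (f : Option L → Option L) :
    Option L → Option L :=
  σ.foldl (fun g l => fun t => swapV ((none : Option L), some l) (g t)) f

/-- The Star STS instance is a YES instance. -/
def StarSTSYes {L : Type*} [DecidableEq L] (π : Equiv.Perm (Option L)) (σ : List L) : Prop :=
  ∃ σ' : List L, σ'.Sublist σ ∧ starApply σ' id = ⇑π

variable {m n : ℕ}

/-- `nᵢ`: the number of occurrences of slot `i` in the swap sequence. -/
def cnt (s : Fin n → Fin m) (i : Fin m) : ℕ :=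
  (Finset.univ.filter fun j : Fin n => s j = i).card

/-- Among the occurrences of the slot `s j`, the rank (number of earlier occurrences)
of position `j`. -/
def rankOcc (s : Fin n → Fin m) (j : Fin n) : ℕ :=
  (Finset.univ.filter fun j' : Fin n => s j' = s j ∧ j'.val < j.val).card

/-- Tokens of the weighted instance: item tokens (`Option (Fin m)`, `none` = item 0),
and the weight-1 tokens `xⱼ` (`Sum.inl`) and `yⱼ` (`Sum.inr`). -/
abbrev TokW (m n : ℕ) := Option (Fin m) ⊕ (Fin n ⊕ Fin n)

/-- Token weights: item tokens have weight `0`, all `xⱼ`, `yⱼ` have weight `1`. -/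
def wtW : TokW m n → ℕ
  | Sum.inl _ => 0
  | Sum.inr _ => 1

/-- The constructed tree for the weighted instance: ordering path of length `n`,
slot path `i` of length `nᵢ`, nook attached to the path vertex adjacent to the root. -/
def WGraph (s : Fin n → Fin m) : SimpleGraph (Vtx m) := Tree (cnt s) n 1

/-- Initial placement of the tokens. -/
def initW (s : Fin n → Fin m) : TokW m n → Vtx m
  | Sum.inl none => .root
  | Sum.inl (some i) => .nook i
  | Sum.inr (Sum.inl j) => .ord j.val
  | Sum.inr (Sum.inr j) => .slot (s j) (rankOcc s j)

/-- Target placement of the tokens. -/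
def tgtW (s : Fin n → Fin m) (π : Equiv.Perm (Option (Fin m))) : TokW m n → Vtx m
  | Sum.inl o => (match π o with | none => .root | some i => .nook i)
  | Sum.inr (Sum.inl j) => .slot (s j) (cnt s (s j) - 1 - rankOcc s j)
  | Sum.inr (Sum.inr j) => .ord (n - 1 - j.val)

/-- The cost of a swap sequence: each swap costs the sum of the weights of the two
tokens at the endpoints of the swapped edge. -/
def costSeq (wt : TokW m n → ℕ) : List (Vtx m × Vtx m) → (TokW m n → Vtx m) → ℕ
  | [], _ => 0
  | e :: rest, f =>
      (∑ t : TokW m n, if f t = e.1 ∨ f t = e.2 then wt t else 0) +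
        costSeq wt rest (fun t => swapV e (f t))

/-- `K`: the sum over the weight-1 tokens of the distance between initial and target
vertices. -/
noncomputable def KW (s : Fin n → Fin m) (π : Equiv.Perm (Option (Fin m))) : ℕ :=
  ∑ t : Fin n ⊕ Fin n, (WGraph s).dist (initW s (Sum.inr t)) (tgtW s π (Sum.inr t))

/-!
Since `K` sums the distances of the weighted tokens to their targets, it bounds the cost of every
solution from below, and a solution attains it only if each swap brings every weighted token that
it moves one step closer to its target. The tokens of such a solution follow geodesics, so the `x`
tokens leave the ordering path in order and the `y` tokens enter it in order. All vertices of the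
tree stay occupied; hence counting the tokens in the slot gadgets at a moment when an item stands
on the path of slot gadget `i` shows that the tokens `x` of exactly the first `a` turns have reached
their gadgets, for some `a` whose next turn is a turn of slot `i`. So the swaps at the nooks, read
as swaps of the star, form a subsequence of the given sequence, after cancellation of pairs that
fall into the same turn.

Conversely, turn `j` is carried out by exchanging `x_j` and `y_j` through the root. The item at the
root steps aside into the gadget of slot `s_j`, where it may change places with the item at the
nook for free, as both are weightless.
-/

section

open Finset Function Relation

section Swaps

variable {T V : Type*} [DecidableEq V]

theorem swapV_eq_swap (e : V × V) : swapV e = Equiv.swap e.1 e.2 :=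
  rfl

theorem swapV_swapV (e : V × V) (v : V) : swapV e (swapV e v) = v := by
  simp only [swapV_eq_swap, Equiv.swap_apply_self]

theorem swapV_bijective (e : V × V) : Bijective (swapV e) := by
  rw [swapV_eq_swap]
  exact Equiv.bijective _

theorem swapV_mem {S : Set V} {e : V × V} (h₁ : e.1 ∈ S) (h₂ : e.2 ∈ S) {v : V} (hv : v ∈ S) :
    swapV e v ∈ S := by
  unfold swapV
  split_ifs <;> assumption

theorem range_swapV_comp {e : V × V} {f : T → V} (h₁ : e.1 ∈ Set.range f)
    (h₂ : e.2 ∈ Set.range f) : Set.range (swapV e ∘ f) = Set.range f := by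
  ext v
  constructor
  · rintro ⟨t, rfl⟩
    exact swapV_mem h₁ h₂ ⟨t, rfl⟩
  · intro hv
    obtain ⟨t, ht⟩ := swapV_mem h₁ h₂ hv
    exact ⟨t, by rw [comp_apply, ht, swapV_swapV]⟩

/-- The vertex to which the swap sequence `σ` carries the token standing at `v`. -/
def destination (σ : List (V × V)) (v : V) : V :=
  σ.foldl (fun u e => swapV e u) v

theorem destination_append (σ τ : List (V × V)) (v : V) :
    destination (σ ++ τ) v = destination τ (destination σ v) :=
  List.foldl_append

theorem destination_bijective (σ : List (V × V)) : Bijective (destination σ) := by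
  induction σ with
  | nil => exact bijective_id
  | cons e _ ih => exact ih.comp (swapV_bijective e)

theorem applySwaps_eq_comp (σ : List (V × V)) (f : T → V) :
    applySwaps σ f = destination σ ∘ f := by
  induction σ generalizing f with
  | nil => rfl
  | cons _ _ ih => exact ih _

theorem applySwaps_append (σ τ : List (V × V)) (f : T → V) :
    applySwaps (σ ++ τ) f = applySwaps τ (applySwaps σ f) :=
  List.foldl_append

theorem applySwaps_injective (σ : List (V × V)) {f : T → V} (hf : Injective f) :
    Injective (applySwaps σ f) := by
  rw [applySwaps_eq_comp]
  exact (destination_bijective σ).injective.comp hf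

theorem starApply_surjective (τ : List V) {f : Option V → Option V} (hf : Surjective f) :
    Surjective (starApply τ f) := by
  induction τ generalizing f with
  | nil => exact hf
  | cons l _ ih => exact ih ((swapV_bijective (none, some l)).surjective.comp hf)

theorem starApply_append (σ τ : List V) (f : Option V → Option V) :
    starApply (σ ++ τ) f = starApply τ (starApply σ f) :=
  List.foldl_append

/-- If the remaining subsequence already begins with `l`, then swapping `l` beforehand as well
cancels that first swap. -/
theorem exists_sublist_starApply_of_swap {l : V} {σ τ : List V} (hτ : τ.Sublist (l :: σ))
    (f : Option V → Option V) :
    ∃ τ' : List V, τ'.Sublist (l :: σ) ∧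
      starApply τ' f = starApply τ (swapV (none, some l) ∘ f) := by
  rcases List.sublist_cons_iff.1 hτ with hτσ | ⟨τ', rfl, hτσ⟩
  · exact ⟨l :: τ, hτσ.cons_cons l, rfl⟩
  · refine ⟨τ', hτσ.cons l, congrArg (starApply τ') ?_⟩
    funext o
    exact (swapV_swapV _ _).symm

/-- The swaps that carry the token at `q 0` along the path `q` to `q k`. -/
def shiftSwaps (q : ℕ → V) (k : ℕ) : List (V × V) :=
  (List.range k).map fun d => (q d, q (d + 1))

theorem destination_shiftSwaps_succ (q : ℕ → V) (k : ℕ) (v : V) :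
    destination (shiftSwaps q (k + 1)) v =
      swapV (q k, q (k + 1)) (destination (shiftSwaps q k) v) := by
  simp only [shiftSwaps, List.range_succ, List.map_append, destination_append]
  rfl

theorem destination_shiftSwaps_of_forall_ne {q : ℕ → V} {k : ℕ} {v : V}
    (h : ∀ d ≤ k, v ≠ q d) : destination (shiftSwaps q k) v = v := by
  induction k with
  | zero => rfl
  | succ k ih =>
    rw [destination_shiftSwaps_succ, ih fun d hd => h d (by omega)]
    simp [swapV, h k (by omega), h (k + 1) le_rfl]

theorem destination_shiftSwaps_zero (q : ℕ → V) (k : ℕ) :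
    destination (shiftSwaps q k) (q 0) = q k := by
  induction k with
  | zero => rfl
  | succ k ih => rw [destination_shiftSwaps_succ, ih]; simp [swapV]

theorem destination_shiftSwaps_of_lt {q : ℕ → V} (hq : Injective q) {k d : ℕ} (h : d < k) :
    destination (shiftSwaps q k) (q (d + 1)) = q d := by
  induction k with
  | zero => omega
  | succ k ih =>
    rw [destination_shiftSwaps_succ]
    rcases (Nat.lt_succ_iff.1 h).eq_or_lt with rfl | hdk
    · rw [destination_shiftSwaps_of_forall_ne fun e he => hq.ne (by omega)]
      simp [swapV, hq.eq_iff]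
    · rw [ih hdk]
      simp [swapV, hq.eq_iff, hdk.ne, show d ≠ k + 1 by omega]

end Swaps

section Cost

variable {T V : Type*} [Fintype T] [DecidableEq V]

/-- The cost of the single swap `e` at the placement `f`. -/
def swapCost (wt : T → ℕ) (e : V × V) (f : T → V) : ℕ :=
  ∑ t, if f t = e.1 ∨ f t = e.2 then wt t else 0

/-- The total weight of the tokens at `v`. -/
def weightAt (wt : T → ℕ) (f : T → V) (v : V) : ℕ :=
  ∑ t, if f t = v then wt t else 0

theorem swapCost_le_weightAt_add (wt : T → ℕ) (e : V × V) (f : T → V) :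
    swapCost wt e f ≤ weightAt wt f e.1 + weightAt wt f e.2 := by
  rw [weightAt, weightAt, ← sum_add_distrib]
  refine sum_le_sum fun t _ => ?_
  grind

theorem weightAt_apply {f : T → V} (hf : Injective f) (wt : T → ℕ) (t : T) :
    weightAt wt f (f t) = wt t := by
  classical simp only [weightAt, hf.eq_iff, sum_ite_eq', mem_univ, if_true]

/-- `φ` changes by at most one along each edge of `G`. -/
def EdgeLipschitz {V : Type*} (G : SimpleGraph V) (φ : V → ℕ) : Prop :=
  ∀ ⦃u v⦄, G.Adj u v → φ u ≤ φ v + 1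

theorem EdgeLipschitz.le_add_dist {V : Type*} {G : SimpleGraph V} {φ : V → ℕ}
    (hφ : EdgeLipschitz G φ) {u v : V} (h : G.Reachable u v) : φ u ≤ φ v + G.dist u v := by
  obtain ⟨p, hp⟩ := h.exists_walk_length_eq_dist
  rw [← hp]
  clear hp
  induction p with
  | nil => exact le_rfl
  | cons hadj p ih =>
    have := hφ hadj
    have := ih p.reachable
    rw [SimpleGraph.Walk.length_cons]
    omega

theorem EdgeLipschitz.le_swapV {G : SimpleGraph V} {φ : V → ℕ}
    (hφ : EdgeLipschitz G φ) {e : V × V} (he : G.Adj e.1 e.2) (v : V) :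
    φ v ≤ (if v = e.1 ∨ v = e.2 then 1 else 0) + φ (swapV e v) := by
  have := hφ he
  have := hφ he.symm
  unfold swapV
  grind

/-- The total potential of a placement when token `t` has potential `φ t` per unit of weight. -/
def potential {V : Type*} (wt : T → ℕ) (φ : T → V → ℕ) (f : T → V) : ℕ :=
  ∑ t, wt t * φ t (f t)

/-- `f'` arises from `f` by a swap along an edge of `G` that lowers the potential of every token
of positive weight that it moves. -/
structure TightStep {T : Type*} (G : SimpleGraph V) (wt : T → ℕ) (φ : T → V → ℕ) (f f' : T → V) :
    Prop where
  exists_swap : ∃ e : V × V, G.Adj e.1 e.2 ∧ f' = swapV e ∘ f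
  moves : ∀ t, wt t ≠ 0 → f' t = f t ∨ G.Adj (f t) (f' t) ∧ φ t (f' t) + 1 = φ t (f t)

variable {G : SimpleGraph V} {wt : T → ℕ} {φ : T → V → ℕ}

theorem swapCost_add_potential_swapV (e : V × V) (f : T → V) :
    swapCost wt e f + potential wt φ (swapV e ∘ f) =
      ∑ t, wt t * ((if f t = e.1 ∨ f t = e.2 then 1 else 0) + φ t (swapV e (f t))) := by
  simp only [swapCost, potential, ← sum_add_distrib, mul_add, mul_ite, mul_one, mul_zero,
    comp_apply]

theorem potential_le_swapCost_add (hφ : ∀ t, EdgeLipschitz G (φ t)) {e : V × V}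
    (he : G.Adj e.1 e.2) (f : T → V) :
    potential wt φ f ≤ swapCost wt e f + potential wt φ (swapV e ∘ f) := by
  rw [swapCost_add_potential_swapV]
  exact sum_le_sum fun t _ => Nat.mul_le_mul_left _ ((hφ t).le_swapV he _)

theorem tightStep_of_le_potential (hφ : ∀ t, EdgeLipschitz G (φ t)) {e : V × V}
    (he : G.Adj e.1 e.2) {f : T → V}
    (hle : swapCost wt e f + potential wt φ (swapV e ∘ f) ≤ potential wt φ f) :
    TightStep G wt φ f (swapV e ∘ f) := by
  have heq := (potential_le_swapCost_add hφ he f).antisymm hle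
  rw [swapCost_add_potential_swapV, potential, sum_eq_sum_iff_of_le fun t _ =>
    Nat.mul_le_mul_left _ ((hφ t).le_swapV he _)] at heq
  refine ⟨⟨e, he, rfl⟩, fun t ht => ?_⟩
  have htight := Nat.eq_of_mul_eq_mul_left (Nat.pos_of_ne_zero ht) (heq t (mem_univ t))
  have hsymm := he.symm
  have hne := he.ne
  simp only [comp_apply, swapV] at htight ⊢
  grind

end Cost

section CostSeq

theorem costSeq_cons (wt : TokW m n → ℕ) (e : Vtx m × Vtx m) (σ : List (Vtx m × Vtx m))
    (f : TokW m n → Vtx m) :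
    costSeq wt (e :: σ) f = swapCost wt e f + costSeq wt σ (swapV e ∘ f) :=
  rfl

theorem costSeq_append (wt : TokW m n → ℕ) (σ τ : List (Vtx m × Vtx m)) (f : TokW m n → Vtx m) :
    costSeq wt (σ ++ τ) f = costSeq wt σ f + costSeq wt τ (applySwaps σ f) := by
  induction σ generalizing f with
  | nil => exact (zero_add _).symm
  | cons e σ ih => rw [List.cons_append, costSeq_cons, costSeq_cons, ih, add_assoc]; rfl

variable {G : SimpleGraph (Vtx m)} {wt : TokW m n → ℕ} {φ : TokW m n → Vtx m → ℕ}

theorem potential_le_costSeq_add (hφ : ∀ t, EdgeLipschitz G (φ t)) {σ : List (Vtx m × Vtx m)}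
    (hσ : ∀ e ∈ σ, G.Adj e.1 e.2) (f : TokW m n → Vtx m) :
    potential wt φ f ≤ costSeq wt σ f + potential wt φ (applySwaps σ f) := by
  induction σ generalizing f with
  | nil => exact Nat.le_add_left _ _
  | cons e σ ih =>
    rw [List.forall_mem_cons] at hσ
    calc potential wt φ f
        ≤ swapCost wt e f + potential wt φ (swapV e ∘ f) := potential_le_swapCost_add hφ hσ.1 f
      _ ≤ swapCost wt e f + (costSeq wt σ (swapV e ∘ f) +
            potential wt φ (applySwaps σ (swapV e ∘ f))) := by grw [← ih hσ.2]
      _ = costSeq wt (e :: σ) f + potential wt φ (applySwaps (e :: σ) f) := by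
          rw [costSeq_cons, add_assoc]; rfl

theorem reflTransGen_tightStep (hφ : ∀ t, EdgeLipschitz G (φ t)) {σ : List (Vtx m × Vtx m)}
    (hσ : ∀ e ∈ σ, G.Adj e.1 e.2) {f : TokW m n → Vtx m}
    (hle : costSeq wt σ f + potential wt φ (applySwaps σ f) ≤ potential wt φ f) :
    ReflTransGen (TightStep G wt φ) f (applySwaps σ f) := by
  induction σ generalizing f with
  | nil => exact .refl
  | cons e σ ih =>
    rw [List.forall_mem_cons] at hσ
    have hhead := potential_le_swapCost_add (wt := wt) hφ hσ.1 f
    have htail := potential_le_costSeq_add (wt := wt) hφ hσ.2 (swapV e ∘ f)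
    rw [costSeq_cons] at hle
    change _ + potential wt φ (applySwaps σ (swapV e ∘ f)) ≤ _ at hle
    exact .head (tightStep_of_le_potential hφ hσ.1 (by omega)) (ih hσ.2 (by omega))

end CostSeq

section Tree

theorem wGraph_adj_iff {s : Fin n → Fin m} {u v : Vtx m} :
    (WGraph s).Adj u v ↔ u ≠ v ∧ (rel (cnt s) n 1 u v ∨ rel (cnt s) n 1 v u) :=
  SimpleGraph.fromRel_adj _ _ _

variable {s : Fin n → Fin m} {i : Fin m}

theorem adj_root_slot (h : 0 < cnt s i) : (WGraph s).Adj .root (.slot i 0) :=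
  wGraph_adj_iff.2 ⟨nofun, .inl ⟨rfl, h⟩⟩

theorem adj_root_ord (h : 0 < n) : (WGraph s).Adj .root (.ord 0) :=
  wGraph_adj_iff.2 ⟨nofun, .inl ⟨rfl, h⟩⟩

theorem adj_slot_succ {d : ℕ} (h : d + 1 < cnt s i) :
    (WGraph s).Adj (.slot i d) (.slot i (d + 1)) :=
  wGraph_adj_iff.2 ⟨by simp, .inl ⟨rfl, rfl, h⟩⟩

theorem adj_ord_succ {d : ℕ} (h : d + 1 < n) : (WGraph s).Adj (.ord d) (.ord (d + 1)) :=
  wGraph_adj_iff.2 ⟨by simp, .inl ⟨rfl, h⟩⟩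

theorem adj_slot_nook (h : 0 < cnt s i) : (WGraph s).Adj (.slot i 0) (.nook i) :=
  wGraph_adj_iff.2 ⟨nofun, .inl ⟨rfl, rfl, h⟩⟩

theorem eq_slot_of_adj_nook {v : Vtx m} (h : (WGraph s).Adj (.nook i) v) : v = .slot i 0 := by
  obtain ⟨-, h⟩ := wGraph_adj_iff.1 h
  cases v <;> simp only [rel, or_self, false_or, add_eq_right] at h
  obtain ⟨rfl, rfl, -⟩ := h
  rfl

/-- The distance to `slot i a` in the infinite tree of which `WGraph s` is a finite part. -/
def distSlot (i : Fin m) (a : ℕ) : Vtx m → ℕ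
  | .root => a + 1
  | .ord d => d + a + 2
  | .slot i' d => if i' = i then (d - a) + (a - d) else d + a + 2
  | .nook i' => if i' = i then a + 1 else a + 3

/-- The distance to `ord b` in the infinite tree of which `WGraph s` is a finite part. -/
def distOrd (b : ℕ) : Vtx m → ℕ
  | .root => b + 1
  | .ord d => (d - b) + (b - d)
  | .slot _ d => d + b + 2
  | .nook _ => b + 3

theorem edgeLipschitz_distSlot (i : Fin m) (a : ℕ) : EdgeLipschitz (WGraph s) (distSlot i a) := by
  intro u v h
  obtain ⟨-, h⟩ := wGraph_adj_iff.1 h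
  cases u <;> cases v <;> simp only [rel, distSlot] at h ⊢ <;> grind

theorem edgeLipschitz_distOrd (b : ℕ) : EdgeLipschitz (WGraph s) (distOrd b) := by
  intro u v h
  obtain ⟨-, h⟩ := wGraph_adj_iff.1 h
  cases u <;> cases v <;> simp only [rel, distOrd] at h ⊢ <;> grind

theorem exists_walk_of_path {V : Type*} {G : SimpleGraph V} {r : V} {q : ℕ → V} {k : ℕ}
    (hr : G.Adj r (q 0)) (hq : ∀ d < k, G.Adj (q d) (q (d + 1))) :
    ∃ p : G.Walk r (q k), p.length = k + 1 := by
  induction k with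
  | zero => exact ⟨hr.toWalk, rfl⟩
  | succ k ih =>
    obtain ⟨p, hp⟩ := ih fun d hd => hq d (by omega)
    exact ⟨p.concat (hq k k.lt_succ_self), by rw [SimpleGraph.Walk.length_concat, hp]⟩

theorem dist_ord_slot {a b : ℕ} (ha : a < cnt s i) (hb : b < n) :
    (WGraph s).dist (.ord b) (.slot i a) = b + a + 2 := by
  obtain ⟨p, hp⟩ := exists_walk_of_path (adj_root_ord (s := s) (by omega : 0 < n))
    (q := Vtx.ord) (k := b) fun d hd => adj_ord_succ (by omega)
  obtain ⟨p', hp'⟩ := exists_walk_of_path (adj_root_slot (s := s) (i := i) (by omega))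
    (q := Vtx.slot i) (k := a) fun d hd => adj_slot_succ (by omega)
  let w := p.reverse.append p'
  refine le_antisymm ?_ ?_
  · calc (WGraph s).dist (.ord b) (.slot i a) ≤ w.length := SimpleGraph.dist_le w
      _ = b + a + 2 := by
        rw [SimpleGraph.Walk.length_append, SimpleGraph.Walk.length_reverse]
        omega
  · have := (edgeLipschitz_distSlot i a).le_add_dist w.reachable
    simp only [distSlot, if_true] at this
    omega

/-- The position on the path `root, ord 0, ord 1, …`, counted from `1`; it is `0` off this path. -/
def height : Vtx m → ℕ
  | .root => 1
  | .ord d => d + 2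
  | _ => 0

theorem height_injective_of_ne_zero {u v : Vtx m} (h : height u = height v) (h₀ : height u ≠ 0) :
    u = v := by
  cases u <;> cases v <;> simp only [height] at h h₀ <;> grind

theorem edgeLipschitz_height : EdgeLipschitz (WGraph s) height := by
  intro u v h
  obtain ⟨-, h⟩ := wGraph_adj_iff.1 h
  cases u <;> cases v <;> simp only [rel, height] at h ⊢ <;> grind

/-- A token at `u` is ahead of one at `v` on the way from the ordering path to a slot gadget. -/
def Precedes (u v : Vtx m) : Prop :=
  height u < height v ∨ height u = 0

theorem Precedes.of_step {u v u' v' : Vtx m} (h : Precedes u v) (hu : height u' ≤ height u)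
    (hv : height v ≤ height v' + 1) (hne : u' ≠ v') : Precedes u' v' := by
  by_contra hcon
  obtain ⟨hlt, h₀⟩ := not_or.1 hcon
  unfold Precedes at h
  exact hne (height_injective_of_ne_zero (by omega) h₀)

/-- `u` lies on the path of the tree between `slot i a` and `ord b`. -/
def OnRoute (i : Fin m) (a b : ℕ) : Vtx m → Prop
  | .root => True
  | .ord d => d ≤ b
  | .slot i' d => i' = i ∧ d ≤ a
  | .nook _ => False

theorem OnRoute.toward_slot {a b : ℕ} {u v : Vtx m} (hu : OnRoute i a b u)
    (h : (WGraph s).Adj u v) (hd : distSlot i a v + 1 = distSlot i a u) :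
    OnRoute i a b v ∧ height v ≤ height u := by
  obtain ⟨-, h⟩ := wGraph_adj_iff.1 h
  cases u <;> cases v <;> simp only [rel, distSlot, OnRoute, height] at h hd hu ⊢ <;> grind

theorem OnRoute.toward_ord {a b : ℕ} {u v : Vtx m} (hu : OnRoute i a b u)
    (h : (WGraph s).Adj u v) (hd : distOrd b v + 1 = distOrd b u) :
    OnRoute i a b v ∧ height u ≤ height v := by
  obtain ⟨-, h⟩ := wGraph_adj_iff.1 h
  cases u <;> cases v <;> simp only [rel, distOrd, OnRoute, height] at h hd hu ⊢ <;> grind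

/-- The slot whose gadget path contains a vertex, if there is one. -/
def gadget : Vtx m → Option (Fin m)
  | .slot i _ => some i
  | _ => none

theorem OnRoute.gadget_eq_some_iff {i' : Fin m} {a b : ℕ} {v : Vtx m} (hv : OnRoute i a b v) :
    gadget v = some i' ↔ i = i' ∧ height v = 0 := by
  cases v <;> simp_all [OnRoute, gadget, height]

/-- The star vertex that an item at a vertex of the tree occupies: a leaf for the nooks, and the
center everywhere else. -/
def toStar : Vtx m → Option (Fin m)
  | .nook i => some i
  | _ => none

/-- The vertex of the tree corresponding to a vertex of the star. -/
def ofStar : Option (Fin m) → Vtx m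
  | none => .root
  | some i => .nook i

theorem toStar_eq_none_of_gadget {v : Vtx m} (h : gadget v = some i) : toStar v = none := by
  cases v <;> simp_all [gadget, toStar]

end Tree

section Occurrences

theorem sum_val_lt_succ {M : Type*} [AddCommMonoid M] (F : Fin n → M) (k : Fin n) :
    ∑ j with j.val < k.val + 1, F j = F k + ∑ j with j.val < k.val, F j := by
  have hinsert : univ.filter (fun j : Fin n => j.val < k.val + 1) =
      insert k (univ.filter fun j => j.val < k.val) := by grind
  rw [hinsert, sum_insert (by simp)]

theorem mem_iff_val_lt_card {S : Finset (Fin n)} (hS : IsLowerSet (S : Set (Fin n))) {j : Fin n} :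
    j ∈ S ↔ j.val < #S := by
  constructor
  · intro hj
    have hsub : Iic j ⊆ S := fun k hk => hS (mem_Iic.1 hk) hj
    simpa using card_le_card hsub
  · contrapose!
    intro hj
    have hsub : S ⊆ Iio j := fun k hk => mem_Iio.2 <| lt_of_not_ge fun hjk => hj (hS hjk hk)
    simpa using card_le_card hsub

/-- The number of occurrences of `i` among the first `k` entries of `s`. -/
def occBefore (s : Fin n → Fin m) (k : ℕ) (i : Fin m) : ℕ :=
  #{j | s j = i ∧ j.val < k}

variable (s : Fin n → Fin m)

theorem rankOcc_eq_occBefore (j : Fin n) : rankOcc s j = occBefore s j (s j) :=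
  rfl

theorem occBefore_zero (i : Fin m) : occBefore s 0 i = 0 := by
  simp [occBefore]

theorem occBefore_succ (k : Fin n) (i : Fin m) :
    occBefore s (k + 1) i = occBefore s k i + if s k = i then 1 else 0 := by
  simp only [occBefore, and_comm (a := s _ = i), ← filter_filter, card_filter _ (filter _ _),
    sum_val_lt_succ]
  exact add_comm _ _

theorem occBefore_mono (i : Fin m) : Monotone fun k => occBefore s k i :=
  fun _ _ h => card_le_card fun j => by simp only [mem_filter_univ]; omega

theorem occBefore_le_cnt (k : ℕ) (i : Fin m) : occBefore s k i ≤ cnt s i :=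
  card_le_card fun j => by simp only [mem_filter_univ]; exact And.left

variable {s}

theorem rankOcc_lt_of_lt {j k : Fin n} (h : j < k) (hs : s j = s k) :
    rankOcc s j < rankOcc s k := by
  have hsucc := occBefore_succ s j (s k)
  have hmono : occBefore s (j + 1) (s k) ≤ occBefore s k (s k) := occBefore_mono s (s k) h
  rw [if_pos hs] at hsucc
  rw [rankOcc_eq_occBefore, rankOcc_eq_occBefore, hs]
  omega

theorem rankOcc_lt_cnt (j : Fin n) : rankOcc s j < cnt s (s j) := by
  have hsucc := occBefore_succ s j (s j)
  have hle := occBefore_le_cnt s (j + 1) (s j)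
  rw [if_pos rfl] at hsucc
  rw [rankOcc_eq_occBefore]
  omega

theorem eq_of_rankOcc_eq {j k : Fin n} (hs : s j = s k) (h : rankOcc s j = rankOcc s k) :
    j = k := by
  rcases lt_trichotomy j k with hlt | heq | hlt
  · exact absurd h (rankOcc_lt_of_lt hlt hs).ne
  · exact heq
  · exact absurd h (rankOcc_lt_of_lt hlt hs.symm).ne'

theorem rankOcc_injOn (i : Fin m) : Set.InjOn (rankOcc s) ({j | s j = i} : Finset (Fin n)) := by
  intro j hj k hk
  have hs : s j = s k := by simp_all
  exact eq_of_rankOcc_eq hs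

theorem image_rankOcc (i : Fin m) :
    ({j | s j = i} : Finset (Fin n)).image (rankOcc s) = range (cnt s i) := by
  refine eq_of_subset_of_card_le (fun d hd => ?_) ?_
  · obtain ⟨j, hj, rfl⟩ := mem_image.1 hd
    rw [mem_range, ← (mem_filter_univ j).1 hj]
    exact rankOcc_lt_cnt j
  · rw [card_range, card_image_of_injOn (rankOcc_injOn i)]
    rfl

theorem exists_rankOcc_eq {i : Fin m} {d : ℕ} (hd : d < cnt s i) :
    ∃ j, s j = i ∧ rankOcc s j = d := by
  have hmem := mem_range.2 hd
  rw [← image_rankOcc] at hmem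
  simpa only [mem_image, mem_filter_univ] using hmem

theorem sum_cnt_sub_rankOcc (s : Fin n → Fin m) :
    ∑ j, (cnt s (s j) - 1 - rankOcc s j) = ∑ j, rankOcc s j := by
  rw [← sum_fiberwise _ s, ← sum_fiberwise _ s]
  refine sum_congr rfl fun i _ => ?_
  calc ∑ j with s j = i, (cnt s (s j) - 1 - rankOcc s j)
      = ∑ j with s j = i, (cnt s i - 1 - rankOcc s j) :=
        sum_congr rfl fun j hj => by rw [(mem_filter_univ j).1 hj]
    _ = ∑ d ∈ range (cnt s i), (cnt s i - 1 - d) := by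
        rw [← image_rankOcc, sum_image (rankOcc_injOn i)]
    _ = ∑ d ∈ range (cnt s i), d := sum_range_reflect id (cnt s i)
    _ = ∑ j with s j = i, rankOcc s j := by rw [← image_rankOcc, sum_image (rankOcc_injOn i)]

theorem sum_sub_one_sub (n : ℕ) : ∑ j : Fin n, (n - 1 - j.val) = ∑ j : Fin n, j.val := by
  rw [Fin.sum_univ_eq_sum_range (n - 1 - ·), Fin.sum_univ_eq_sum_range fun d => d]
  exact sum_range_reflect id n

end Occurrences

section Placements

/-- The token of an item of the Star STS instance. -/
abbrev itemTok (o : Option (Fin m)) : TokW m n := .inl o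

/-- The token `xⱼ`. -/
abbrev xTok (j : Fin n) : TokW m n := .inr (.inl j)

/-- The token `yⱼ`. -/
abbrev yTok (j : Fin n) : TokW m n := .inr (.inr j)

variable {s : Fin n → Fin m}

theorem initW_injective : Injective (initW s) := by
  rintro ((_ | i) | j | j) ((_ | i') | k | k) h <;>
    simp only [initW, Vtx.nook.injEq, Vtx.ord.injEq, Vtx.slot.injEq, reduceCtorEq] at h
  · rfl
  · rw [h]
  · rw [Fin.ext h]
  · rw [eq_of_rankOcc_eq h.1 h.2]

theorem mem_range_initW_of_adj {u v : Vtx m} (h : (WGraph s).Adj u v) :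
    u ∈ Set.range (initW s) := by
  obtain ⟨-, h⟩ := wGraph_adj_iff.1 h
  cases u with
  | root => exact ⟨itemTok none, rfl⟩
  | ord d =>
    have hd : d < n := by cases v <;> simp only [rel] at h <;> grind
    exact ⟨xTok ⟨d, hd⟩, rfl⟩
  | slot i d =>
    have hd : d < cnt s i := by cases v <;> simp only [rel] at h <;> grind
    obtain ⟨j, rfl, rfl⟩ := exists_rankOcc_eq hd
    exact ⟨yTok j, rfl⟩
  | nook i => exact ⟨itemTok (some i), rfl⟩

/-- The distance from a vertex to the target of a token, with the value `0` for the weightless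
item tokens. -/
def remDist (s : Fin n → Fin m) : TokW m n → Vtx m → ℕ
  | .inl _ => fun _ => 0
  | .inr (.inl j) => distSlot (s j) (cnt s (s j) - 1 - rankOcc s j)
  | .inr (.inr j) => distOrd (n - 1 - j)

theorem edgeLipschitz_remDist (t : TokW m n) : EdgeLipschitz (WGraph s) (remDist s t) :=
  match t with
  | .inl _ => fun _ _ _ => Nat.zero_le _
  | .inr (.inl _) => edgeLipschitz_distSlot _ _
  | .inr (.inr _) => edgeLipschitz_distOrd _

variable (s) (π : Equiv.Perm (Option (Fin m)))

theorem potential_initW : potential wtW (remDist s) (initW s) =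
    ∑ j, (j.val + (cnt s (s j) - 1 - rankOcc s j) + 2) +
      ∑ j : Fin n, (rankOcc s j + (n - 1 - j) + 2) := by
  simp only [potential, Fintype.sum_sum_type, wtW, remDist, initW, distSlot, distOrd, zero_mul,
    sum_const_zero, zero_add, one_mul]

theorem potential_tgtW : potential wtW (remDist s) (tgtW s π) = 0 := by
  simp [potential, Fintype.sum_sum_type, wtW, remDist, tgtW, distSlot, distOrd]

theorem kW_eq_potential : KW s π = potential wtW (remDist s) (initW s) := by
  rw [potential_initW, KW, Fintype.sum_sum_type]
  congr 1 <;> refine sum_congr rfl fun j _ => ?_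
  · exact dist_ord_slot (by have := rankOcc_lt_cnt (s := s) j; omega) j.2
  · rw [SimpleGraph.dist_comm]
    exact (dist_ord_slot (rankOcc_lt_cnt j) (by omega)).trans (by omega)

end Placements

section Reverse

/-- The invariant of a swap sequence that starts at `initW s` and wastes no swap. -/
structure Admissible (s : Fin n → Fin m) (f : TokW m n → Vtx m) : Prop where
  injective : Injective f
  range_eq : Set.range f = Set.range (initW s)
  x_onRoute : ∀ j, OnRoute (s j) (cnt s (s j) - 1 - rankOcc s j) j (f (xTok j))
  y_onRoute : ∀ j, OnRoute (s j) (rankOcc s j) (n - 1 - j) (f (yTok j))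
  x_precedes : ∀ ⦃j k⦄, j < k → Precedes (f (xTok j)) (f (xTok k))
  item_injective : Injective fun o => toStar (f (itemTok o))

/-- The `y` tokens are in their final relative order: whichever of them has left its slot gadget is
farther out on the ordering path than all the later ones. -/
def YOrdered (f : TokW m n → Vtx m) : Prop :=
  ∀ ⦃j k⦄, j < k → Precedes (f (yTok k)) (f (yTok j))

/-- The number of `x` tokens that have reached their slot gadgets. -/
def arrived (f : TokW m n → Vtx m) : ℕ :=
  #{j | height (f (xTok j)) = 0}

/-- The number of `y` tokens that have left their slot gadgets. -/
def departed (f : TokW m n → Vtx m) : ℕ :=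
  #{j | height (f (yTok j)) ≠ 0}

theorem OnRoute.toStar_eq_none {i : Fin m} {a b : ℕ} {v : Vtx m} (hv : OnRoute i a b v) :
    toStar v = none := by
  cases v <;> simp_all [OnRoute, toStar]

theorem toStar_swapV_of_eq_none {e : Vtx m × Vtx m} (h₁ : toStar e.1 = none)
    (h₂ : toStar e.2 = none) (v : Vtx m) : toStar (swapV e v) = toStar v := by
  unfold swapV
  split_ifs <;> simp_all

theorem toStar_swapV_nook {i : Fin m} {v : Vtx m} (hv : v = .slot i 0 ∨ toStar v ≠ none) :
    toStar (swapV (.nook i, .slot i 0) v) = swapV (none, some i) (toStar v) := by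
  cases v <;> simp_all [toStar, swapV]
  grind

theorem toStar_eq_none_or_swapV_eq {s : Fin n → Fin m} {e : Vtx m × Vtx m}
    (he : (WGraph s).Adj e.1 e.2) :
    (toStar e.1 = none ∧ toStar e.2 = none) ∨ ∃ i, swapV e = swapV (.nook i, .slot i 0) := by
  obtain ⟨u, v⟩ := e
  change (WGraph s).Adj u v at he
  cases u with
  | nook i => exact .inr ⟨i, by rw [eq_slot_of_adj_nook he]⟩
  | _ =>
    cases v with
    | nook i =>
      exact .inr ⟨i, by rw [eq_slot_of_adj_nook he.symm, swapV_eq_swap, swapV_eq_swap,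
        Equiv.swap_comm]⟩
    | _ => exact .inl ⟨rfl, rfl⟩

variable {s : Fin n → Fin m} {f f' : TokW m n → Vtx m}

theorem admissible_initW : Admissible s (initW s) where
  injective := initW_injective
  range_eq := rfl
  x_onRoute _ := le_rfl
  y_onRoute _ := ⟨rfl, le_rfl⟩
  x_precedes _ _ h := .inl (Nat.add_lt_add_right h 2)
  item_injective := by
    convert injective_id with o
    cases o <;> rfl

namespace TightStep

theorem x_move (h : TightStep (WGraph s) wtW (remDist s) f f') (hf : Admissible s f) (j : Fin n) :
    OnRoute (s j) (cnt s (s j) - 1 - rankOcc s j) j (f' (xTok j)) ∧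
      height (f' (xTok j)) ≤ height (f (xTok j)) ∧
      height (f (xTok j)) ≤ height (f' (xTok j)) + 1 := by
  rcases h.moves (xTok j) one_ne_zero with heq | ⟨hadj, hdist⟩
  · rw [heq]
    exact ⟨hf.x_onRoute j, le_rfl, Nat.le_succ _⟩
  · obtain ⟨hroute, hle⟩ := (hf.x_onRoute j).toward_slot hadj hdist
    exact ⟨hroute, hle, edgeLipschitz_height hadj⟩

theorem y_move (h : TightStep (WGraph s) wtW (remDist s) f f') (hf : Admissible s f) (j : Fin n) :
    OnRoute (s j) (rankOcc s j) (n - 1 - j) (f' (yTok j)) ∧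
      height (f (yTok j)) ≤ height (f' (yTok j)) ∧
      height (f' (yTok j)) ≤ height (f (yTok j)) + 1 := by
  rcases h.moves (yTok j) one_ne_zero with heq | ⟨hadj, hdist⟩
  · rw [heq]
    exact ⟨hf.y_onRoute j, le_rfl, Nat.le_succ _⟩
  · obtain ⟨hroute, hle⟩ := (hf.y_onRoute j).toward_ord hadj hdist
    exact ⟨hroute, hle, edgeLipschitz_height hadj.symm⟩

theorem toStar_eq_none (h : TightStep (WGraph s) wtW (remDist s) f f') (hf : Admissible s f)
    (t : Fin n ⊕ Fin n) : toStar (f' (.inr t)) = none :=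
  match t with
  | .inl j => (h.x_move hf j).1.toStar_eq_none
  | .inr j => (h.y_move hf j).1.toStar_eq_none

theorem injective (h : TightStep (WGraph s) wtW (remDist s) f f') (hf : Admissible s f) :
    Injective f' := by
  obtain ⟨e, -, rfl⟩ := h.exists_swap
  exact (swapV_bijective e).injective.comp hf.injective

theorem range_eq (h : TightStep (WGraph s) wtW (remDist s) f f') (hf : Admissible s f) :
    Set.range f' = Set.range (initW s) := by
  obtain ⟨e, he, rfl⟩ := h.exists_swap
  rw [range_swapV_comp _ _, hf.range_eq] <;> rw [hf.range_eq]
  exacts [mem_range_initW_of_adj he, mem_range_initW_of_adj he.symm]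

/-- Only items visit nooks, so a swap on a nook edge exchanges the item at the nook with another
item: the only one that is not at a nook. -/
theorem star_move (h : TightStep (WGraph s) wtW (remDist s) f f') (hf : Admissible s f) :
    (∀ o, toStar (f' (itemTok o)) = toStar (f (itemTok o))) ∨
      ∃ i o₀, f (itemTok o₀) = .slot i 0 ∧
        ∀ o, toStar (f' (itemTok o)) = swapV (none, some i) (toStar (f (itemTok o))) := by
  obtain ⟨e, he, rfl⟩ := h.exists_swap
  rcases toStar_eq_none_or_swapV_eq he with ⟨h₁, h₂⟩ | ⟨i, hi⟩
  · exact .inl fun o => toStar_swapV_of_eq_none h₁ h₂ _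
  obtain ⟨t, ht⟩ : Vtx.nook i ∈ Set.range (swapV e ∘ f) := by
    rw [h.range_eq hf]
    exact ⟨itemTok (some i), rfl⟩
  rcases t with o₀ | t
  · have ho₀ : f (itemTok o₀) = .slot i 0 := by
      calc f (itemTok o₀) = swapV e (swapV e (f (itemTok o₀))) := (swapV_swapV _ _).symm
        _ = swapV e (.nook i) := congrArg _ ht
        _ = .slot i 0 := by rw [hi, swapV_eq_swap, Equiv.swap_apply_left]
    refine .inr ⟨i, o₀, ho₀, fun o => ?_⟩
    rw [comp_apply, hi]
    refine toStar_swapV_nook ?_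
    rcases eq_or_ne o o₀ with rfl | ho
    · exact .inl ho₀
    · refine .inr fun hnone => ho (hf.item_injective ?_)
      exact hnone.trans (congrArg toStar ho₀).symm
  · have hnone := h.toStar_eq_none hf t
    rw [ht] at hnone
    exact absurd hnone (Option.some_ne_none i)

theorem admissible (h : TightStep (WGraph s) wtW (remDist s) f f') (hf : Admissible s f) :
    Admissible s f' where
  injective := h.injective hf
  range_eq := h.range_eq hf
  x_onRoute j := (h.x_move hf j).1
  y_onRoute j := (h.y_move hf j).1
  x_precedes j k hjk := (hf.x_precedes hjk).of_step (h.x_move hf j).2.1 (h.x_move hf k).2.2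
    ((h.injective hf).ne (by simp [hjk.ne]))
  item_injective := by
    rcases h.star_move hf with hstar | ⟨i, -, -, hstar⟩
    · simpa only [hstar] using hf.item_injective
    · simp only [hstar]
      exact (swapV_bijective _).injective.comp hf.item_injective

theorem yOrdered (h : TightStep (WGraph s) wtW (remDist s) f f') (hf : Admissible s f)
    (hf' : YOrdered f') : YOrdered f := fun j k hjk =>
  (hf' hjk).of_step (h.y_move hf k).2.1 (h.y_move hf j).2.2 (hf.injective.ne (by simp [hjk.ne']))

theorem arrived_le (h : TightStep (WGraph s) wtW (remDist s) f f') (hf : Admissible s f) :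
    arrived f ≤ arrived f' :=
  card_le_card fun j => by
    simp only [mem_filter_univ]
    exact fun hj => Nat.eq_zero_of_le_zero (hj ▸ (h.x_move hf j).2.1)

end TightStep

theorem yOrdered_tgtW (π : Equiv.Perm (Option (Fin m))) : YOrdered (tgtW s π) := by
  intro j k hjk
  left
  simp only [tgtW, height]
  omega

theorem Admissible.height_x_eq_zero_iff (hf : Admissible s f) (j : Fin n) :
    height (f (xTok j)) = 0 ↔ j.val < arrived f := by
  rw [arrived, ← mem_iff_val_lt_card, mem_filter_univ]
  intro j k hkj hj
  rcases hkj.eq_or_lt with rfl | hlt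
  · exact hj
  · have := hf.x_precedes hlt
    rw [mem_coe, mem_filter_univ] at hj ⊢
    unfold Precedes at this
    omega

theorem YOrdered.height_eq_zero_iff (hf : YOrdered f) (j : Fin n) :
    height (f (yTok j)) = 0 ↔ ¬ j.val < departed f := by
  rw [departed, ← mem_iff_val_lt_card, mem_filter_univ, not_not]
  intro j k hkj hj
  rcases hkj.eq_or_lt with rfl | hlt
  · exact hj
  · have := hf hlt
    rw [mem_coe, mem_filter_univ] at hj ⊢
    unfold Precedes at this
    omega

theorem card_filter_comp_eq {T V : Type*} [Fintype T] {f g : T → V}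
    (hf : Injective f) (hg : Injective g) (h : Set.range f = Set.range g) (p : V → Prop)
    [DecidablePred p] : #{t | p (f t)} = #{t | p (g t)} := by
  classical
  have himage : univ.image f = univ.image g := by
    rw [← coe_inj, coe_image, coe_image, coe_univ, Set.image_univ, Set.image_univ, h]
  rw [← card_image_of_injective _ hf, ← card_image_of_injective _ hg]
  exact congrArg card (by rw [← filter_image, himage, filter_image])

theorem card_filter_tokens (p : TokW m n → Prop) [DecidablePred p] :
    #{t | p t} = #{o | p (itemTok o)} + (#{j | p (xTok j)} + #{j | p (yTok j)}) := by
  simp only [card_filter, Fintype.sum_sum_type]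

theorem card_gadget_initW (i : Fin m) : #{t | gadget (initW s t) = some i} = cnt s i := by
  have hitem : #{o | gadget (initW s (itemTok o)) = some i} = 0 := by
    rw [card_eq_zero, filter_eq_empty_iff]
    rintro (_ | _) - <;> exact nofun
  rw [card_filter_tokens, hitem]
  simp [initW, gadget, cnt]

/-- Slot gadget `i` always holds `cnt s i` tokens: some items, the `x` tokens that have arrived and
the `y` tokens that have not left. -/
theorem Admissible.card_items_add_occBefore (hf : Admissible s f) (hy : YOrdered f) (i : Fin m) :
    #{o | gadget (f (itemTok o)) = some i} + occBefore s (arrived f) i =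
      occBefore s (departed f) i := by
  have hcount := (card_filter_comp_eq hf.injective initW_injective hf.range_eq
    (gadget · = some i)).trans (card_gadget_initW i)
  simp only [card_filter_tokens, (hf.x_onRoute _).gadget_eq_some_iff,
    (hf.y_onRoute _).gadget_eq_some_iff, hf.height_x_eq_zero_iff, hy.height_eq_zero_iff] at hcount
  have hsplit : occBefore s (departed f) i + #{j | s j = i ∧ ¬ j.val < departed f} = cnt s i := by
    simp only [occBefore, cnt, ← filter_filter]
    exact card_filter_add_card_filter_not _
  simp only [occBefore] at hsplit ⊢
  omega

/-- The count shows that some item is in the gadget of slot `s (arrived f)`, and only one item is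
away from the nooks. -/
theorem Admissible.slot_arrived_eq (hf : Admissible s f) (hy : YOrdered f) {i : Fin m}
    {o : Option (Fin m)} (ho : gadget (f (itemTok o)) = some i) :
    ∃ h : arrived f < n, s ⟨arrived f, h⟩ = i := by
  have hlt : arrived f < departed f := by
    have hpos : 0 < #{o | gadget (f (itemTok o)) = some i} :=
      card_pos.2 ⟨o, (mem_filter_univ o).2 ho⟩
    have hcount := hf.card_items_add_occBefore hy i
    by_contra! hle
    have : occBefore s (departed f) i ≤ occBefore s (arrived f) i := occBefore_mono s i hle
    omega
  have hn : arrived f < n := hlt.trans_le ((card_le_univ _).trans (Fintype.card_fin n).le)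
  refine ⟨hn, ?_⟩
  set k : Fin n := ⟨arrived f, hn⟩
  obtain ⟨o', ho'⟩ : ∃ o', gadget (f (itemTok o')) = some (s k) := by
    have hcount := hf.card_items_add_occBefore hy (s k)
    have hsucc := occBefore_succ s k (s k)
    have hmono : occBefore s (k + 1) (s k) ≤ occBefore s (departed f) (s k) :=
      occBefore_mono s (s k) hlt
    rw [if_pos rfl] at hsucc
    obtain ⟨o', ho'⟩ : Finset.Nonempty {o | gadget (f (itemTok o)) = some (s k)} :=
      card_pos.1 (by change _ + occBefore s k (s k) = _ at hcount; omega)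
    exact ⟨o', (mem_filter_univ o').1 ho'⟩
  obtain rfl : o' = o := hf.item_injective <|
    (toStar_eq_none_of_gadget ho').trans (toStar_eq_none_of_gadget ho).symm
  exact Option.some_injective _ (ho'.symm.trans ho)

theorem yOrdered_of_reflTransGen {π : Equiv.Perm (Option (Fin m))}
    (h : ReflTransGen (TightStep (WGraph s) wtW (remDist s)) f (tgtW s π)) :
    Admissible s f → YOrdered f := by
  induction h using ReflTransGen.head_induction_on with
  | refl => exact fun _ => yOrdered_tgtW π
  | head hstep _ ih => exact fun hf => hstep.yOrdered hf (ih (hstep.admissible hf))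

/-- The nook swaps of a wasteless swap sequence, read off as star swaps, form a subsequence of the
turns still to come, once repeated swaps within one turn have been cancelled. -/
theorem exists_sublist_drop_of_reflTransGen {π : Equiv.Perm (Option (Fin m))}
    (h : ReflTransGen (TightStep (WGraph s) wtW (remDist s)) f (tgtW s π)) :
    Admissible s f → ∃ τ : List (Fin m), τ.Sublist ((List.ofFn s).drop (arrived f)) ∧
      starApply τ (fun o => toStar (f (itemTok o))) = π := by
  induction h using ReflTransGen.head_induction_on with
  | refl =>
    refine fun _ => ⟨[], List.nil_sublist _, ?_⟩
    funext o
    simp only [starApply, List.foldl_nil, tgtW]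
    cases π o <;> rfl
  | @head f f' hstep hrest ih =>
    intro hf
    obtain ⟨τ, hτ, hπ⟩ := ih (hstep.admissible hf)
    replace hτ := hτ.trans (List.drop_sublist_drop_left _ (hstep.arrived_le hf))
    rcases hstep.star_move hf with hstar | ⟨i, o, ho, hstar⟩
    · exact ⟨τ, hτ, by simpa only [hstar] using hπ⟩
    · have hy := yOrdered_of_reflTransGen (.head hstep hrest) hf
      obtain ⟨hn, rfl⟩ := hf.slot_arrived_eq hy (congrArg gadget ho)
      rw [List.drop_eq_getElem_cons (by simpa using hn), List.getElem_ofFn] at hτ ⊢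
      obtain ⟨τ', hτ', heq⟩ := exists_sublist_starApply_of_swap hτ
        fun o => toStar (f (itemTok o))
      refine ⟨τ', hτ', heq.trans ?_⟩
      rw [← hπ]
      exact congrArg (starApply τ) (funext fun o => (hstar o).symm)

theorem starSTSYes_of_costSeq_le {π : Equiv.Perm (Option (Fin m))} {σ : List (Vtx m × Vtx m)}
    (hσ : ∀ e ∈ σ, (WGraph s).Adj e.1 e.2) (htgt : applySwaps σ (initW s) = tgtW s π)
    (hcost : costSeq wtW σ (initW s) ≤ KW s π) : StarSTSYes π (List.ofFn s) := by
  have htight : ReflTransGen (TightStep (WGraph s) wtW (remDist s)) (initW s) (tgtW s π) := by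
    rw [← htgt]
    refine reflTransGen_tightStep edgeLipschitz_remDist hσ ?_
    rwa [htgt, potential_tgtW, add_zero, ← kW_eq_potential s π]
  obtain ⟨τ, hτ, hπ⟩ := exists_sublist_drop_of_reflTransGen htight admissible_initW
  refine ⟨τ, hτ.trans (List.drop_sublist _ _), ?_⟩
  rw [← hπ]
  refine congrArg (starApply τ) (funext fun o => ?_)
  cases o <;> rfl

end Reverse

section Forward

section

variable {f : TokW m n → Vtx m}

theorem weightAt_itemTok (hf : Injective f) (o : Option (Fin m)) :
    weightAt wtW f (f (itemTok o)) = 0 :=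
  weightAt_apply hf wtW _

theorem weightAt_le_one (hf : Injective f) (v : Vtx m) : weightAt wtW f v ≤ 1 := by
  by_cases hv : v ∈ Set.range f
  · obtain ⟨t, rfl⟩ := hv
    rw [weightAt_apply hf]
    cases t <;> simp [wtW]
  · rw [weightAt, sum_eq_zero fun t _ => if_neg fun ht => hv ⟨t, ht⟩]
    exact zero_le_one

theorem swapCost_le_two (hf : Injective f) (e : Vtx m × Vtx m) : swapCost wtW e f ≤ 2 :=
  (swapCost_le_weightAt_add wtW e f).trans
    (add_le_add (weightAt_le_one hf e.1) (weightAt_le_one hf e.2))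

theorem swapCost_le_one (hf : Injective f) {e : Vtx m × Vtx m} {o : Option (Fin m)}
    (ho : f (itemTok o) = e.1 ∨ f (itemTok o) = e.2) : swapCost wtW e f ≤ 1 := by
  have hle := swapCost_le_weightAt_add wtW e f
  have h₀ := weightAt_itemTok hf o
  have h₁ := weightAt_le_one hf e.1
  have h₂ := weightAt_le_one hf e.2
  rcases ho with ho | ho <;> rw [ho] at h₀ <;> omega

theorem swapCost_eq_zero (hf : Injective f) {e : Vtx m × Vtx m} {o o' : Option (Fin m)}
    (ho : f (itemTok o) = e.1) (ho' : f (itemTok o') = e.2) : swapCost wtW e f = 0 := by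
  have hle := swapCost_le_weightAt_add wtW e f
  rwa [← ho, ← ho', weightAt_itemTok hf, weightAt_itemTok hf, add_zero, Nat.le_zero] at hle

end

theorem costSeq_le_two_mul_length (σ : List (Vtx m × Vtx m)) {f : TokW m n → Vtx m}
    (hf : Injective f) : costSeq wtW σ f ≤ 2 * σ.length := by
  induction σ generalizing f with
  | nil => exact Nat.zero_le _
  | cons e σ ih =>
    have hhead := swapCost_le_two hf e
    have htail := ih ((swapV_bijective e).injective.comp hf)
    rw [costSeq_cons, List.length_cons]
    omega

/-- Exchanges the tokens at `ord 0` and `slot i 0` through the root. The root item meanwhile steps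
aside to `slot i 0`, where it changes places with the item at `nook i` if `b` is true. -/
def exchange (b : Bool) (i : Fin m) : List (Vtx m × Vtx m) :=
  [(.root, .slot i 0)] ++ (cond b [(.slot i 0, .nook i)] [] ++
    [(.root, .ord 0), (.root, .slot i 0)])

/-- The swaps of one turn of slot `i`: an exchange, after which the token that entered the ordering
path is carried to `ord p` and the one that entered the slot gadget to `slot i q`. -/
def round (b : Bool) (i : Fin m) (p q : ℕ) : List (Vtx m × Vtx m) :=
  exchange b i ++ (shiftSwaps .ord p ++ shiftSwaps (.slot i) q)

theorem destination_exchange_ofStar (b : Bool) (i : Fin m) (g : Option (Fin m) → Option (Fin m))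
    (o : Option (Fin m)) :
    destination (exchange b i) (ofStar (g o)) = ofStar (starApply (cond b [i] []) g o) := by
  cases b
  · change destination (exchange false i) (ofStar (g o)) = ofStar (g o)
    cases g o <;> simp [exchange, destination, ofStar, swapV]
  · change destination (exchange true i) (ofStar (g o)) = ofStar (swapV (none, some i) (g o))
    rcases g o with _ | i'
    · simp [exchange, destination, ofStar, swapV]
    · by_cases hi : i' = i <;> simp [exchange, destination, ofStar, swapV, hi]

theorem destination_exchange_ord_zero (b : Bool) (i : Fin m) :
    destination (exchange b i) (.ord 0) = .slot i 0 := by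
  cases b <;> simp [exchange, destination, swapV]

theorem destination_exchange_slot_zero (b : Bool) (i : Fin m) :
    destination (exchange b i) (.slot i 0) = .ord 0 := by
  cases b <;> simp [exchange, destination, swapV]

theorem destination_exchange_ord_of_ne (b : Bool) (i : Fin m) {d : ℕ} (hd : d ≠ 0) :
    destination (exchange b i) (.ord d) = .ord d := by
  cases b <;> simp [exchange, destination, swapV, hd]

theorem destination_exchange_slot_of_ne (b : Bool) {i i' : Fin m} {d : ℕ} (h : i' = i → d ≠ 0) :
    destination (exchange b i) (.slot i' d) = .slot i' d := by
  have hne : ¬(i' = i ∧ d = 0) := fun h' => h h'.1 h'.2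
  cases b <;> simp [exchange, destination, swapV, hne]

theorem destination_shiftSwaps_ord_slot (p : ℕ) (i : Fin m) (d : ℕ) :
    destination (shiftSwaps .ord p) (Vtx.slot i d) = .slot i d :=
  destination_shiftSwaps_of_forall_ne fun _ _ => nofun

theorem destination_shiftSwaps_slot_ord (q : ℕ) (i : Fin m) (d : ℕ) :
    destination (shiftSwaps (.slot i) q) (Vtx.ord d) = .ord d :=
  destination_shiftSwaps_of_forall_ne fun _ _ => nofun

section

variable (b : Bool) (i : Fin m) (p q : ℕ)

theorem destination_round (v : Vtx m) : destination (round b i p q) v =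
    destination (shiftSwaps (.slot i) q)
      (destination (shiftSwaps .ord p) (destination (exchange b i) v)) := by
  rw [round, destination_append, destination_append]

theorem destination_round_ofStar (g : Option (Fin m) → Option (Fin m)) (o : Option (Fin m)) :
    destination (round b i p q) (ofStar (g o)) = ofStar (starApply (cond b [i] []) g o) := by
  rw [destination_round, destination_exchange_ofStar]
  generalize starApply (cond b [i] []) g o = o'
  rw [destination_shiftSwaps_of_forall_ne (q := Vtx.ord),
    destination_shiftSwaps_of_forall_ne (q := Vtx.slot i)] <;> cases o' <;> exact nofun

theorem destination_round_ord_zero :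
    destination (round b i p q) (.ord 0) = .slot i q := by
  rw [destination_round, destination_exchange_ord_zero, destination_shiftSwaps_ord_slot,
    destination_shiftSwaps_zero]

theorem destination_round_slot_zero :
    destination (round b i p q) (.slot i 0) = .ord p := by
  rw [destination_round, destination_exchange_slot_zero, destination_shiftSwaps_zero Vtx.ord,
    destination_shiftSwaps_slot_ord]

variable {i p q}

theorem destination_round_ord_succ {d : ℕ} (hd : d < p) :
    destination (round b i p q) (.ord (d + 1)) = .ord d := by
  rw [destination_round, destination_exchange_ord_of_ne _ _ (by omega : d + 1 ≠ 0),
    destination_shiftSwaps_of_lt (q := Vtx.ord) (fun _ _ => Vtx.ord.inj) hd,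
    destination_shiftSwaps_slot_ord]

theorem destination_round_ord_of_lt {d : ℕ} (hd : p < d) :
    destination (round b i p q) (.ord d) = .ord d := by
  rw [destination_round, destination_exchange_ord_of_ne _ _ hd.ne_bot,
    destination_shiftSwaps_of_forall_ne (q := Vtx.ord), destination_shiftSwaps_slot_ord]
  exact fun e he h => by have := Vtx.ord.inj h; omega

theorem destination_round_slot_succ {d : ℕ} (hd : d < q) :
    destination (round b i p q) (.slot i (d + 1)) = .slot i d := by
  rw [destination_round, destination_exchange_slot_of_ne _ fun _ => (by omega : d + 1 ≠ 0),
    destination_shiftSwaps_ord_slot,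
    destination_shiftSwaps_of_lt (fun _ _ h => (Vtx.slot.inj h).2) hd]

theorem destination_round_slot_of_lt {i' : Fin m} {d : ℕ} (h : i' = i → q < d) :
    destination (round b i p q) (.slot i' d) = .slot i' d := by
  rw [destination_round, destination_exchange_slot_of_ne _ fun hi => (h hi).ne_bot,
    destination_shiftSwaps_ord_slot, destination_shiftSwaps_of_forall_ne]
  intro e he heq
  obtain ⟨hi, rfl⟩ := Vtx.slot.inj heq
  exact absurd (h hi) (by omega)

end

variable (s : Fin n → Fin m)

/-- The placement after `k` turns in which the items stand as in the star placement `g`. -/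
def stage (k : ℕ) (g : Option (Fin m) → Option (Fin m)) : TokW m n → Vtx m
  | .inl o => ofStar (g o)
  | .inr (.inl j) =>
      if j.val < k then .slot (s j) (cnt s (s j) - 1 - rankOcc s j) else .ord (j - k)
  | .inr (.inr j) =>
      if j.val < k then .ord (n - 1 - j) else .slot (s j) (rankOcc s j - occBefore s k (s j))

theorem stage_zero : stage s 0 id = initW s := by
  funext t
  rcases t with (_ | i) | j | j <;> simp [stage, initW, ofStar, occBefore_zero]

theorem stage_last (π : Equiv.Perm (Option (Fin m))) : stage s n π = tgtW s π := by
  funext t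
  rcases t with o | j | j
  · simp only [stage, tgtW]
    cases π o <;> rfl
  all_goals simp [stage, tgtW]

/-- The swaps of turn `k`, which carry `x_k` and `y_k` to their targets. -/
def turn (b : Bool) (k : Fin n) : List (Vtx m × Vtx m) :=
  round b (s k) (n - 1 - k) (cnt s (s k) - 1 - rankOcc s k)

variable {s}

theorem destination_turn_xTok (b : Bool) (k j : Fin n) (g g' : Option (Fin m) → Option (Fin m)) :
    destination (turn s b k) (stage s k g (xTok j)) = stage s (k + 1) g' (xTok j) := by
  have hj := rankOcc_lt_cnt (s := s) j
  simp only [stage, turn]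
  rcases lt_trichotomy j k with hlt | rfl | hlt
  · rw [if_pos (by omega), if_pos (by omega), destination_round_slot_of_lt]
    intro hs
    have hrank := rankOcc_lt_of_lt hlt hs
    rw [← hs]
    have hk := rankOcc_lt_cnt (s := s) k
    rw [← hs] at hk
    omega
  · rw [if_neg (by omega), if_pos (by omega), Nat.sub_self, destination_round_ord_zero]
  · rw [if_neg (by omega), if_neg (by omega),
      show j.val - k.val = j.val - (k.val + 1) + 1 by omega,
      destination_round_ord_succ _ (by omega)]

theorem destination_turn_yTok (b : Bool) (k j : Fin n) (g g' : Option (Fin m) → Option (Fin m)) :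
    destination (turn s b k) (stage s k g (yTok j)) = stage s (k + 1) g' (yTok j) := by
  have hj := rankOcc_lt_cnt (s := s) j
  simp only [stage, turn]
  rcases lt_trichotomy j k with hlt | rfl | hlt
  · rw [if_pos (by omega), if_pos (by omega), destination_round_ord_of_lt _ (by omega)]
  · rw [if_neg (by omega), if_pos (by omega), rankOcc_eq_occBefore, Nat.sub_self,
      destination_round_slot_zero]
  · rw [if_neg (by omega), if_neg (by omega), occBefore_succ]
    by_cases hs : s k = s j
    · have hrank := rankOcc_lt_of_lt hlt hs
      rw [if_pos hs, ← hs, ← rankOcc_eq_occBefore,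
        show rankOcc s j - rankOcc s k = rankOcc s j - (rankOcc s k + 1) + 1 by omega,
        destination_round_slot_succ]
      rw [hs]
      omega
    · rw [if_neg hs, add_zero, destination_round_slot_of_lt _ fun h => absurd h.symm hs]

theorem applySwaps_turn (b : Bool) (k : Fin n) (g : Option (Fin m) → Option (Fin m)) :
    applySwaps (turn s b k) (stage s k g) = stage s (k + 1) (starApply (cond b [s k] []) g) := by
  rw [applySwaps_eq_comp]
  funext t
  rcases t with o | j | j
  · exact destination_round_ofStar _ _ _ _ g o
  · exact destination_turn_xTok b k j _ _
  · exact destination_turn_yTok b k j _ _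

theorem adj_of_mem_shiftSwaps {V : Type*} {G : SimpleGraph V} {q : ℕ → V} {k : ℕ}
    (hq : ∀ d < k, G.Adj (q d) (q (d + 1))) : ∀ e ∈ shiftSwaps q k, G.Adj e.1 e.2 := by
  intro e he
  obtain ⟨d, hd, rfl⟩ := List.mem_map.1 he
  exact hq d (List.mem_range.1 hd)

theorem adj_of_mem_turn (b : Bool) (k : Fin n) : ∀ e ∈ turn s b k, (WGraph s).Adj e.1 e.2 := by
  have hrank := rankOcc_lt_cnt (s := s) k
  have hcnt : 0 < cnt s (s k) := by omega
  have hnook : ∀ e ∈ cond b [(Vtx.slot (s k) 0, Vtx.nook (s k))] [], (WGraph s).Adj e.1 e.2 := by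
    cases b <;> simp [adj_slot_nook hcnt]
  simp only [turn, round, exchange, List.forall_mem_append, List.forall_mem_cons]
  refine ⟨⟨⟨adj_root_slot hcnt, nofun⟩, hnook, adj_root_ord k.pos, adj_root_slot hcnt, nofun⟩,
    adj_of_mem_shiftSwaps fun d hd => adj_ord_succ (by omega),
    adj_of_mem_shiftSwaps (q := Vtx.slot (s k)) fun d hd => adj_slot_succ (by omega)⟩

theorem costSeq_exchange_le (b : Bool) {i : Fin m} {f : TokW m n → Vtx m} (hf : Injective f)
    {o o' : Option (Fin m)} (ho : f (itemTok o) = .root) (ho' : f (itemTok o') = .nook i) :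
    costSeq wtW (exchange b i) f ≤ 4 := by
  set f₁ := swapV (.root, .slot i 0) ∘ f with hf₁
  have hinj₁ : Injective f₁ := (swapV_bijective _).injective.comp hf
  have hslot : f₁ (itemTok o) = .slot i 0 := by simp [hf₁, ho, swapV]
  have hnook : f₁ (itemTok o') = .nook i := by simp [hf₁, ho', swapV]
  have hfirst : swapCost wtW (.root, .slot i 0) f ≤ 1 := swapCost_le_one hf (.inl ho)
  have hrest {f₂ : TokW m n → Vtx m} (hf₂ : Injective f₂) {o₂ : Option (Fin m)}
      (ho₂ : f₂ (itemTok o₂) = .slot i 0) :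
      costSeq wtW [(.root, .ord 0), (.root, .slot i 0)] f₂ ≤ 3 := by
    have hcross := swapCost_le_two hf₂ (.root, .ord 0)
    have hback : swapCost wtW (.root, .slot i 0) (swapV (.root, .ord 0) ∘ f₂) ≤ 1 :=
      swapCost_le_one ((swapV_bijective _).injective.comp hf₂) (o := o₂)
        (.inr (by simp [ho₂, swapV]))
    rw [costSeq_cons, costSeq_cons, costSeq, add_zero]
    omega
  cases b
  · have := hrest hinj₁ hslot
    rw [exchange, List.singleton_append, costSeq_cons]
    exact (add_le_add hfirst this).trans (by norm_num)
  · have hfree : swapCost wtW (.slot i 0, .nook i) f₁ = 0 := swapCost_eq_zero hinj₁ hslot hnook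
    have := hrest (f₂ := swapV (.slot i 0, .nook i) ∘ f₁)
      ((swapV_bijective _).injective.comp hinj₁) (o₂ := o') (by simp [hnook, swapV])
    rw [exchange, List.singleton_append, costSeq_cons, cond_true, List.singleton_append,
      costSeq_cons]
    exact (add_le_add hfirst (add_le_add hfree.le this)).trans (by norm_num)

/-- An upper bound for the cost of turn `k`. -/
def turnCost (s : Fin n → Fin m) (k : Fin n) : ℕ :=
  4 + 2 * ((n - 1 - k) + (cnt s (s k) - 1 - rankOcc s k))

theorem costSeq_turn_le (b : Bool) (k : Fin n) {g : Option (Fin m) → Option (Fin m)}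
    (hg : Surjective g) (hf : Injective (stage s k g)) :
    costSeq wtW (turn s b k) (stage s k g) ≤ turnCost s k := by
  obtain ⟨o, ho⟩ := hg none
  obtain ⟨o', ho'⟩ := hg (some (s k))
  have hexchange := costSeq_exchange_le b hf (congrArg ofStar ho) (congrArg ofStar ho')
  have hshift := costSeq_le_two_mul_length
    (shiftSwaps .ord (n - 1 - k) ++ shiftSwaps (.slot (s k)) (cnt s (s k) - 1 - rankOcc s k))
    (applySwaps_injective (exchange b (s k)) hf)
  rw [List.length_append, shiftSwaps, shiftSwaps, List.length_map, List.length_map,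
    List.length_range, List.length_range] at hshift
  rw [turn, round, costSeq_append]
  exact add_le_add hexchange hshift

theorem sum_turnCost (s : Fin n → Fin m) :
    ∑ k, turnCost s k = potential wtW (remDist s) (initW s) := by
  have h₁ := sum_cnt_sub_rankOcc s
  have h₂ := sum_sub_one_sub n
  simp only [potential_initW, turnCost, sum_add_distrib, ← mul_sum, sum_const, smul_eq_mul, h₁, h₂]
  ring

theorem exists_swaps_stage {k : ℕ} (hk : k ≤ n) :
    ∀ {τ : List (Fin m)}, τ.Sublist ((List.ofFn s).take k) →
      ∃ σ : List (Vtx m × Vtx m), (∀ e ∈ σ, (WGraph s).Adj e.1 e.2) ∧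
        applySwaps σ (initW s) = stage s k (starApply τ id) ∧
        costSeq wtW σ (initW s) ≤ ∑ j with j.val < k, turnCost s j := by
  induction k with
  | zero =>
    intro τ hτ
    obtain rfl := List.sublist_nil.1 hτ
    exact ⟨[], nofun, (stage_zero s).symm, Nat.zero_le _⟩
  | succ k ih =>
    intro τ hτ
    rw [List.take_succ_eq_append_getElem (by simpa using hk), List.getElem_ofFn,
      List.sublist_append_iff] at hτ
    obtain ⟨τ', τ'', rfl, hτ', hτ''⟩ := hτ
    obtain ⟨σ, hadj, hstage, hcost⟩ := ih (by omega) hτ'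
    let j : Fin n := ⟨k, hk⟩
    obtain ⟨b, rfl⟩ : ∃ b : Bool, τ'' = cond b [s j] [] := by
      rcases List.sublist_singleton.1 hτ'' with rfl | rfl
      exacts [⟨false, rfl⟩, ⟨true, rfl⟩]
    have hinj : Injective (stage s j (starApply τ' id)) :=
      hstage ▸ applySwaps_injective σ initW_injective
    refine ⟨σ ++ turn s b j, List.forall_mem_append.2 ⟨hadj, adj_of_mem_turn b j⟩, ?_, ?_⟩
    · rw [applySwaps_append, hstage, starApply_append]
      exact applySwaps_turn b j _
    · rw [costSeq_append, hstage, sum_val_lt_succ _ j, add_comm]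
      exact add_le_add (costSeq_turn_le b j (starApply_surjective τ' surjective_id) hinj) hcost

theorem exists_swaps_of_starSTSYes {π : Equiv.Perm (Option (Fin m))}
    (h : StarSTSYes π (List.ofFn s)) :
    ∃ σ : List (Vtx m × Vtx m), (∀ e ∈ σ, (WGraph s).Adj e.1 e.2) ∧
      applySwaps σ (initW s) = tgtW s π ∧ costSeq wtW σ (initW s) ≤ KW s π := by
  obtain ⟨τ, hτ, hπ⟩ := h
  obtain ⟨σ, hadj, hstage, hcost⟩ := exists_swaps_stage (s := s) le_rfl (τ := τ)
    (by rwa [List.take_of_length_le (List.length_ofFn.le)])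
  refine ⟨σ, hadj, by rw [hstage, hπ, stage_last], hcost.trans_eq ?_⟩
  rw [kW_eq_potential, ← sum_turnCost, filter_true_of_mem fun j _ => j.2]

end Forward

end

theorem starSTS_iff_weightedTokenSwapping_general (s : Fin n → Fin m)
    (π : Equiv.Perm (Option (Fin m))) :
    StarSTSYes π (List.ofFn s) ↔
      ∃ σ : List (Vtx m × Vtx m),
        (∀ e ∈ σ, (WGraph s).Adj e.1 e.2) ∧
        applySwaps σ (initW s) = tgtW s π ∧
        costSeq wtW σ (initW s) ≤ KW s π :=
  ⟨exists_swaps_of_starSTSYes, fun ⟨_, hadj, htgt, hcost⟩ =>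
    starSTSYes_of_costSeq_le hadj htgt hcost⟩

theorem starSTS_iff_weightedTokenSwapping (s : Fin n → Fin m)
    (π : Equiv.Perm (Option (Fin m)))
    (hocc : ∀ i : Fin m, ∃ j, s j = i)
    (hcons : ∀ (j : Fin n) (h : j.val + 1 < n), s j ≠ s ⟨j.val + 1, h⟩) :
    StarSTSYes π (List.ofFn s) ↔
      ∃ σ : List (Vtx m × Vtx m),
        (∀ e ∈ σ, (WGraph s).Adj e.1 e.2) ∧
        applySwaps σ (initW s) = tgtW s π ∧
        costSeq wtW σ (initW s) ≤ KW s π :=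
  starSTS_iff_weightedTokenSwapping_general s π

end Stmt2
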